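/- Let (D, F) be a good pair, X ⊆ ℝⁿ a convex compact set, A : ℝⁿ → ℝᵐ an affine map with A(X) ⊆ M, and g ∈ ℝⁿ. Then for every ε with 0 ≤ ε < 1/4 one has RiskA(ε) ≤ θ(ε) · Risk_*(ε), where θ(ε) = 2·ln(2/ε)/ln(1/(4ε)); that is, the minimax optimal ε-risk achievable with affine estimates is within the factor θ(ε) of the minimax optimal ε-risk over all Borel estimates. -/

import Mathlib

open MeasureTheory Real Matrix Set
open scoped ENNReal

/-- A "good pair" `(𝒟, ℱ)` in the sense of Juditsky–Nemirovski:
a parametric family of positive probability densities `p μ`, `μ ∈ M`, on `(Ω, P)`,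
together with a finite-dimensional linear space `F` of Borel functions on `Ω`
containing the constants, such that log-likelihood ratios belong to `F` and
`μ ↦ ln ∫ e^{φ} p_μ dP` is well defined (finite, witnessed by integrability)
and concave on `M` for every `φ ∈ F`. -/
structure GoodPair (Ω : Type*) [MeasurableSpace Ω] (P : Measure Ω)
    (E : Type*) [NormedAddCommGroup E] [NormedSpace ℝ E] where
  M : Set E
  p : E → Ω → ℝ
  F : Submodule ℝ (Ω → ℝ)
  M_open : IsOpen M
  M_convex : Convex ℝ M
  p_meas : ∀ μ ∈ M, Measurable (p μ)
  p_pos : ∀ μ ∈ M, ∀ ω, 0 < p μ ω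
  p_prob : ∀ μ ∈ M, ∫ ω, p μ ω ∂P = 1
  F_fd : FiniteDimensional ℝ F
  F_meas : ∀ φ ∈ F, Measurable φ
  F_const : ∀ c : ℝ, (fun _ : Ω => c) ∈ F
  logratio_mem : ∀ μ ∈ M, ∀ ν ∈ M, (fun ω => Real.log (p μ ω / p ν ω)) ∈ F
  F_finite : ∀ φ ∈ F, ∀ μ ∈ M, Integrable (fun ω => Real.exp (φ ω) * p μ ω) P
  F_concave : ∀ φ ∈ F,
    ConcaveOn ℝ M (fun μ => Real.log (∫ ω, Real.exp (φ ω) * p μ ω ∂P))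

variable {Ω : Type*} [MeasurableSpace Ω] {P : Measure Ω}
  {E : Type*} [NormedAddCommGroup E] [NormedSpace ℝ E] {n : ℕ}

/-- The distribution of the observation when the parameter is `μ`:
the measure with density `p μ` with respect to `P`. -/
noncomputable def obsMeasure (D : GoodPair Ω P E) (μ : E) : Measure Ω :=
  P.withDensity fun ω => ENNReal.ofReal (D.p μ ω)

/-- The `ε`-risk of an estimate `ghat` of the linear form `gᵀx`, `x ∈ X`:
`inf {δ | sup_{x ∈ X} Prob_{ω ∼ p_{A(x)}·P} {|ghat ω - gᵀx| > δ} < ε}`. -/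
noncomputable def Risk (D : GoodPair Ω P E) (A : (Fin n → ℝ) →ᵃ[ℝ] E)
    (g : Fin n → ℝ) (X : Set (Fin n → ℝ)) (ghat : Ω → ℝ) (ε : ℝ) : ℝ :=
  sInf {δ : ℝ |
    (⨆ x ∈ X, obsMeasure D (A x) {ω | δ < |ghat ω - g ⬝ᵥ x|}) < ENNReal.ofReal ε}

/-- The minimax optimal `ε`-risk over all (Borel) estimates. -/
noncomputable def RiskStar (D : GoodPair Ω P E) (A : (Fin n → ℝ) →ᵃ[ℝ] E)
    (g : Fin n → ℝ) (X : Set (Fin n → ℝ)) (ε : ℝ) : ℝ :=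
  sInf {ρ : ℝ | ∃ ghat : Ω → ℝ, Measurable ghat ∧ ρ = Risk D A g X ghat ε}

/-- The minimax optimal `ε`-risk over affine estimates, i.e. estimates `φ ∈ F`. -/
noncomputable def RiskAff (D : GoodPair Ω P E) (A : (Fin n → ℝ) →ᵃ[ℝ] E)
    (g : Fin n → ℝ) (X : Set (Fin n → ℝ)) (ε : ℝ) : ℝ :=
  sInf {ρ : ℝ | ∃ φ ∈ D.F, ρ = Risk D A g X φ ε}

/-- The function `Φ_r(x, y; φ, α)`. -/
noncomputable def PhiFun (D : GoodPair Ω P E) (A : (Fin n → ℝ) →ᵃ[ℝ] E)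
    (g : Fin n → ℝ) (r : ℝ) (x y : Fin n → ℝ) (φ : Ω → ℝ) (α : ℝ) : ℝ :=
  g ⬝ᵥ x - g ⬝ᵥ y
    + α * Real.log (∫ ω, Real.exp (φ ω / α) * D.p (A y) ω ∂P)
    + α * Real.log (∫ ω, Real.exp (-φ ω / α) * D.p (A x) ω ∂P)
    + 2 * α * r

/-- `Φ_*(r)` defined through the sup-inf value:
`2Φ_*(r) = sup_{x,y ∈ X} inf_{φ ∈ F, α > 0} Φ_r(x, y; φ, α)`. -/
noncomputable def PhiStarSI (D : GoodPair Ω P E) (A : (Fin n → ℝ) →ᵃ[ℝ] E)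
    (g : Fin n → ℝ) (X : Set (Fin n → ℝ)) (r : ℝ) : ℝ :=
  (1/2) * sSup {v : ℝ | ∃ x ∈ X, ∃ y ∈ X,
    v = sInf {w : ℝ | ∃ φ ∈ D.F, ∃ α : ℝ, 0 < α ∧ w = PhiFun D A g r x y φ α}}

/-- `Φ_*(r)` defined through the inf-sup value:
`2Φ_*(r) = inf_{φ ∈ F, α > 0} sup_{x,y ∈ X} Φ_r(x, y; φ, α)`. -/
noncomputable def PhiStarIS (D : GoodPair Ω P E) (A : (Fin n → ℝ) →ᵃ[ℝ] E)
    (g : Fin n → ℝ) (X : Set (Fin n → ℝ)) (r : ℝ) : ℝ :=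
  (1/2) * sInf {v : ℝ | ∃ φ ∈ D.F, ∃ α : ℝ, 0 < α ∧
    v = sSup {w : ℝ | ∃ x ∈ X, ∃ y ∈ X, w = PhiFun D A g r x y φ α}}

/-!
The observations at two signals are compared through their Hellinger affinity, and both risks are
compared with the modulus `ω(r)`: the largest half-gap of `gᵀx` between two signals in `X` whose
observations have affinity at least `e^{-r}`.

* An estimate of risk less than half the gap `gᵀx - gᵀy` tells `x` from `y` with both error
  probabilities below `ε`, which forces the affinity below `2√ε`. Hence
  `ω(½ ln(1/(4ε))) ≤ Risk_*(ε)`.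
* By the Chernoff bound, `Φ_r(x, y; φ, α) ≤ 2c` on `X × X` with `r = ln(2/ε)` makes the `ε`-risk of
  `φ + const` at most `c`. Since `Φ_r` is concave in `(x, y)` and jointly convex in `(φ, α)`, it
  suffices to choose `(φ, α)` separately for each pair `(x, y)`; there half the log-likelihood ratio
  turns the sum of the two log-moment generating functions into twice the log-affinity, and
  minimising over `α` leaves the pairs of affinity at least `e^{-r}`. Hence `RiskA(ε) ≤ ω(ln(2/ε))`.
* Being an infimum of the sums of log-moment generating functions, which are concave in the
  parameter, the log-affinity is concave, so `t ω(r) ≤ ω(t r)` for `0 < t ≤ 1`, and the ratio of the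
  two radii is `θ(ε)`.
-/

section Minimax

variable {V W : Type*} [TopologicalSpace V] [AddCommGroup V] [IsTopologicalAddGroup V]
  [Module ℝ V] [ContinuousSMul ℝ V] [AddCommGroup W] [Module ℝ W] {K : Set V} {Y : Set W}
  {f : V → W → ℝ} {c : ℝ}

theorem exists_mem_stdSimplex_forall_sum_lt {ι : Type*} [Fintype ι] (hKne : K.Nonempty)
    (hK : IsCompact K) {g : V → ι → ℝ} (hconc : ∀ i, ConcaveOn ℝ K fun x => g x i)
    (husc : ∀ i, UpperSemicontinuousOn (fun x => g x i) K) (h : ∀ x ∈ K, ∃ i, g x i < c) :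
    ∃ w ∈ stdSimplex ℝ ι, ∀ x ∈ K, ∑ i, w i * g x i < c := by
  classical
  have hKcv : Convex ℝ K := by
    obtain ⟨x, hx⟩ := hKne
    obtain ⟨i, -⟩ := h x hx
    exact (hconc i).1
  have hlsc : ∀ w ∈ stdSimplex ℝ ι, LowerSemicontinuousOn (fun x => ∑ i, w i * -g x i) K :=
    fun w hw => lowerSemicontinuousOn_sum fun i _ =>
      (continuous_const.mul continuous_neg).comp_upperSemicontinuousOn_antitone (husc i)
        fun a b hab => mul_le_mul_of_nonneg_left (neg_le_neg hab) (hw.1 i)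
  have hquasi : ∀ w ∈ stdSimplex ℝ ι, QuasiconvexOn ℝ K fun x => ∑ i, w i * -g x i :=
    fun w hw => ConvexOn.quasiconvexOn <| by
      simpa only [Finset.sum_fn] using Finset.sum_induction (fun i x => w i * -g x i)
        (ConvexOn ℝ K) (fun _ _ => ConvexOn.add) (convexOn_const 0 hKcv)
        fun i _ => (hconc i).neg.smul (hw.1 i)
  have hlin : ∀ x ∈ K, QuasiconcaveOn ℝ (stdSimplex ℝ ι) fun w => ∑ i, w i * -g x i :=
    fun x _ => ((Fintype.linearCombination ℝ fun i => -g x i).concaveOn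
      (convex_stdSimplex ℝ ι)).quasiconcaveOn
  have hvertex : ∀ x ∈ K, ∃ w ∈ range fun i => (Pi.single i 1 : ι → ℝ),
      -c < ∑ i, w i * -g x i := fun x hx => by
    obtain ⟨i, hi⟩ := h x hx
    exact ⟨_, ⟨i, rfl⟩, by simpa [Pi.single_apply] using hi⟩
  obtain ⟨w, hw, hlt⟩ := Sion.exists_lt_iInf_of_lt_iInf_of_finite hKne hK hlsc hquasi
    (convex_stdSimplex ℝ ι) (fun x _ => ContinuousOn.upperSemicontinuousOn (by fun_prop)) hlin
    hKcv (finite_range _) (range_subset_iff.2 fun i => single_mem_stdSimplex ℝ i) hvertex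
  exact ⟨w, hw, fun x hx => by simpa using hlt x hx⟩

theorem exists_forall_lt_of_forall_exists_lt (hKne : K.Nonempty) (hK : IsCompact K)
    (hconc : ∀ y ∈ Y, ConcaveOn ℝ K fun x => f x y)
    (husc : ∀ y ∈ Y, UpperSemicontinuousOn (fun x => f x y) K)
    (hconv : ∀ x ∈ K, ConvexOn ℝ Y (f x)) (h : ∀ x ∈ K, ∃ y ∈ Y, f x y < c) :
    ∃ y ∈ Y, ∀ x ∈ K, f x y < c := by
  choose! η hηY hηc using h
  obtain ⟨t, htK, hcover⟩ := hK.elim_nhdsWithin_subcover (fun x => {z | f z (η x) < c})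
    fun x hx => husc _ (hηY x hx) x hx c (hηc x hx)
  have hmem : ∀ i : t, η i ∈ Y := fun i => hηY i (htK i i.2)
  obtain ⟨w, ⟨hw0, hw1⟩, hlt⟩ := exists_mem_stdSimplex_forall_sum_lt (ι := t) hKne hK
    (g := fun x i => f x (η i)) (fun i => hconc _ (hmem i)) (fun i => husc _ (hmem i))
    fun x hx => by
      obtain ⟨i, hi, hxi⟩ := mem_iUnion₂.1 (hcover hx)
      exact ⟨⟨i, hi⟩, hxi⟩
  obtain ⟨x₀, hx₀⟩ := hKne
  refine ⟨∑ i, w i • η i,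
    (hconv x₀ hx₀).1.sum_mem (fun i _ => hw0 i) hw1 fun i _ => hmem i, fun x hx => ?_⟩
  exact ((hconv x hx).map_sum_le (fun i _ => hw0 i) hw1 fun i _ => hmem i).trans_lt (hlt x hx)

end Minimax

section Perspective

variable {V : Type*} [AddCommGroup V] [Module ℝ V]

theorem inv_smul_combo {α β a b : ℝ} (hα : α ≠ 0) (hβ : β ≠ 0) (hγ : a * α + b * β ≠ 0) (x y : V) :
    (a * α + b * β)⁻¹ • (a • x + b • y)
      = (a * α / (a * α + b * β)) • α⁻¹ • x + (b * β / (a * α + b * β)) • β⁻¹ • y := by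
  rw [smul_add, smul_smul, smul_smul, smul_smul, smul_smul]
  congr 2 <;> field_simp

theorem convexOn_perspective {s : Set V} {f : V → ℝ} (hf : ConvexOn ℝ s f) :
    ConvexOn ℝ {z : V × ℝ | 0 < z.2 ∧ z.2⁻¹ • z.1 ∈ s} fun z => z.2 * f (z.2⁻¹ • z.1) := by
  have hγ : ∀ {α β a b : ℝ}, 0 < α → 0 < β → 0 ≤ a → 0 ≤ b → a + b = 1 → 0 < a * α + b * β :=
    fun hα hβ ha hb hab => convex_Ioi (0 : ℝ) hα hβ ha hb hab
  have hsum : ∀ {α β a b : ℝ}, 0 < a * α + b * β →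
      a * α / (a * α + b * β) + b * β / (a * α + b * β) = 1 := fun hγ => by
    rw [← add_div, div_self hγ.ne']
  constructor
  · rintro ⟨x, α⟩ ⟨hα : 0 < α, hx⟩ ⟨y, β⟩ ⟨hβ : 0 < β, hy⟩ a b ha hb hab
    have hγ := hγ hα hβ ha hb hab
    refine ⟨hγ, ?_⟩
    simp only [Prod.smul_mk, Prod.mk_add_mk, smul_eq_mul]
    rw [inv_smul_combo hα.ne' hβ.ne' hγ.ne']
    exact hf.1 hx hy (by positivity) (by positivity) (hsum hγ)
  · rintro ⟨x, α⟩ ⟨hα : 0 < α, hx⟩ ⟨y, β⟩ ⟨hβ : 0 < β, hy⟩ a b ha hb hab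
    have hγ := hγ hα hβ ha hb hab
    simp only [Prod.smul_mk, Prod.mk_add_mk, smul_eq_mul]
    rw [inv_smul_combo hα.ne' hβ.ne' hγ.ne']
    calc _ ≤ (a * α + b * β) * _ := mul_le_mul_of_nonneg_left
          (hf.2 hx hy (by positivity) (by positivity) (hsum hγ)) hγ.le
      _ = _ := by
        simp only [smul_eq_mul]
        field_simp

end Perspective

section MomentGenerating

open ProbabilityTheory

variable {μ : Measure Ω} {t : ℝ}

theorem integral_exp_sub_const {X : Ω → ℝ} (c : ℝ) :
    ∫ ω, exp (t * X ω - c) ∂μ = mgf X μ t / exp c := by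
  simp_rw [exp_sub]
  rw [integral_div, mgf]

theorem convexOn_cgf {S : Set (Ω → ℝ)} (hS : Convex ℝ S)
    (hint : ∀ X ∈ S, Integrable (fun ω => exp (t * X ω)) μ) :
    ConvexOn ℝ S fun X => cgf X μ t := by
  rcases eq_or_ne μ 0 with rfl | hμ
  · simpa using convexOn_const 0 hS
  refine ⟨hS, fun X hX Y hY a b ha hb hab => ?_⟩
  have hint_sub : ∀ Z ∈ S, ∀ c, Integrable (fun ω => exp (t * Z ω - c)) μ := fun Z hZ c => by
    simpa only [exp_sub] using (hint Z hZ).div_const _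
  have hexp : ∀ Z ∈ S, exp (cgf Z μ t) = mgf Z μ t := fun Z hZ => exp_log (mgf_pos' hμ (hint Z hZ))
  have hone : ∀ Z ∈ S, ∫ ω, exp (t * Z ω - cgf Z μ t) ∂μ = 1 := fun Z hZ => by
    rw [integral_exp_sub_const, hexp Z hZ, div_self (mgf_pos' hμ (hint Z hZ)).ne']
  have hZ := hS hX hY ha hb hab
  set u := a • cgf X μ t + b • cgf Y μ t
  have hle : exp (cgf (a • X + b • Y) μ t - u) ≤ 1 := by
    calc exp (cgf (a • X + b • Y) μ t - u)
        = ∫ ω, exp (t * (a • X + b • Y) ω - u) ∂μ := by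
          rw [integral_exp_sub_const, exp_sub, hexp _ hZ]
      _ ≤ ∫ ω, (a * exp (t * X ω - cgf X μ t) + b * exp (t * Y ω - cgf Y μ t)) ∂μ := by
          refine integral_mono (hint_sub _ hZ _) (((hint_sub X hX _).const_mul a).add
            ((hint_sub Y hY _).const_mul b)) fun ω => ?_
          have hcomb : t * (a • X + b • Y) ω - u
              = a • (t * X ω - cgf X μ t) + b • (t * Y ω - cgf Y μ t) := by
            simp only [u, Pi.add_apply, Pi.smul_apply, smul_eq_mul]
            ring
          exact (congrArg exp hcomb).trans_le
            (convexOn_exp.2 (mem_univ _) (mem_univ _) ha hb hab)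
      _ = 1 := by
          rw [integral_add ((hint_sub X hX _).const_mul a) ((hint_sub Y hY _).const_mul b),
            integral_const_mul, integral_const_mul, hone X hX, hone Y hY, mul_one, mul_one, hab]
  exact sub_nonpos.1 (exp_le_one_iff.1 hle)

theorem convexOn_mul_cgf_div {S : Submodule ℝ (Ω → ℝ)}
    (hint : ∀ X ∈ S, Integrable (fun ω => exp (t * X ω)) μ) :
    ConvexOn ℝ ((S : Set (Ω → ℝ)) ×ˢ Ioi 0) fun z : (Ω → ℝ) × ℝ => z.2 * cgf z.1 μ (t / z.2) := by
  refine ((convexOn_perspective (convexOn_cgf S.convex hint)).subset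
    (fun z hz => ⟨hz.2, S.smul_mem _ hz.1⟩) (S.convex.prod (convex_Ioi 0))).congr fun z _ => ?_
  simp only [cgf, mgf_smul_left, inv_mul_eq_div]

end MomentGenerating

section CauchySchwarz

variable {μ : Measure Ω} {f h : Ω → ℝ}

theorem memLp_two_sqrt (hf : Integrable f μ) : MemLp (fun ω => √(f ω)) 2 μ := by
  refine (memLp_two_iff_integrable_sq
    (continuous_sqrt.comp_aestronglyMeasurable hf.aestronglyMeasurable)).2 ?_
  simpa only [Function.comp_apply, sq_sqrt'] using hf.pos_part

theorem integrable_sqrt_mul (hf : Integrable f μ) (hh : Integrable h μ) (hf0 : 0 ≤ᵐ[μ] f) :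
    Integrable (fun ω => √(f ω * h ω)) μ := by
  refine ((memLp_two_sqrt hf).integrable_mul (memLp_two_sqrt hh)).congr ?_
  filter_upwards [hf0] with ω hω
  exact (sqrt_mul hω _).symm

theorem integral_sqrt_mul_le (hf : Integrable f μ) (hh : Integrable h μ) (hf0 : 0 ≤ᵐ[μ] f)
    (hh0 : 0 ≤ᵐ[μ] h) :
    ∫ ω, √(f ω * h ω) ∂μ ≤ √(∫ ω, f ω ∂μ) * √(∫ ω, h ω ∂μ) := by
  have hsq : ∀ {k : Ω → ℝ}, 0 ≤ᵐ[μ] k → ∫ ω, √(k ω) ^ (2 : ℝ) ∂μ = ∫ ω, k ω ∂μ := fun hk =>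
    integral_congr_ae <| by
      filter_upwards [hk] with ω hω
      rw [rpow_two, sq_sqrt hω]
  calc ∫ ω, √(f ω * h ω) ∂μ = ∫ ω, √(f ω) * √(h ω) ∂μ := integral_congr_ae <| by
        filter_upwards [hf0] with ω hω using sqrt_mul hω _
    _ ≤ (∫ ω, √(f ω) ^ (2 : ℝ) ∂μ) ^ (1 / 2 : ℝ) * (∫ ω, √(h ω) ^ (2 : ℝ) ∂μ) ^ (1 / 2 : ℝ) :=
        integral_mul_le_Lp_mul_Lq_of_nonneg .two_two (.of_forall fun _ => sqrt_nonneg _)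
          (.of_forall fun _ => sqrt_nonneg _) (by simpa using memLp_two_sqrt hf)
          (by simpa using memLp_two_sqrt hh)
    _ = √(∫ ω, f ω ∂μ) * √(∫ ω, h ω ∂μ) := by rw [hsq hf0, hsq hh0, sqrt_eq_rpow, sqrt_eq_rpow]

end CauchySchwarz

theorem exp_half_log_div_mul {a b : ℝ} (ha : 0 < a) (hb : 0 < b) :
    exp (log (b / a) / 2) * a = √(a * b) := by
  rw [exp_half, exp_log (div_pos hb ha), sqrt_div hb.le, sqrt_mul ha.le]
  have := sqrt_pos.2 ha
  field_simp
  rw [sq_sqrt ha.le]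

theorem exists_pos_add_mul_lt {a b c : ℝ} (h : 0 ≤ b → a < c) : ∃ α > 0, a + α * b < c := by
  rcases le_or_gt 0 b with hb | hb
  · have hα : 0 < (c - a) / (b + 1) := div_pos (sub_pos.2 (h hb)) (by linarith)
    have hmul : (c - a) / (b + 1) * (b + 1) = c - a := div_mul_cancel₀ _ (by linarith)
    exact ⟨_, hα, by linarith⟩
  · refine ⟨(|a - c| + 1) / -b, div_pos (by positivity) (neg_pos.2 hb), ?_⟩
    rw [div_neg, neg_mul, div_mul_cancel₀ _ hb.ne]
    linarith [le_abs_self (a - c)]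

section Chernoff

open ProbabilityTheory

variable {μ : Measure Ω} [IsFiniteMeasure μ] {Z : Ω → ℝ} {α b k : ℝ}

theorem measureReal_lt_abs_add_le (hα : 0 < α) (hint : Integrable (fun ω => exp (1 / α * Z ω)) μ)
    (hint_neg : Integrable (fun ω => exp (-1 / α * Z ω)) μ)
    (hcgf : α * cgf Z μ (1 / α) + k ≤ b) (hcgf_neg : α * cgf Z μ (-1 / α) - k ≤ b) (δ : ℝ) :
    μ.real {ω | δ < |Z ω + k|} ≤ 2 * exp ((b - δ) / α) := by
  have hupper : μ.real {ω | δ - k ≤ Z ω} ≤ exp ((b - δ) / α) := by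
    refine (measure_ge_le_exp_cgf _ (by positivity) hint).trans (exp_le_exp.2 ?_)
    rw [le_div_iff₀' hα]
    field_simp
    linarith
  rw [neg_div] at hcgf_neg hint_neg
  have hlower : μ.real {ω | Z ω ≤ -δ - k} ≤ exp ((b - δ) / α) := by
    refine (measure_le_le_exp_cgf _ (neg_nonpos.2 (by positivity)) hint_neg).trans (exp_le_exp.2 ?_)
    rw [le_div_iff₀' hα]
    field_simp
    linarith
  calc μ.real {ω | δ < |Z ω + k|}
      ≤ μ.real ({ω | δ - k ≤ Z ω} ∪ {ω | Z ω ≤ -δ - k}) := measureReal_mono fun ω hω =>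
        (lt_abs.1 (show δ < |Z ω + k| from hω)).imp (fun h => show δ - k ≤ Z ω by linarith)
          fun h => show Z ω ≤ -δ - k by linarith
    _ ≤ μ.real {ω | δ - k ≤ Z ω} + μ.real {ω | Z ω ≤ -δ - k} := measureReal_union_le _ _
    _ ≤ 2 * exp ((b - δ) / α) := by linarith

end Chernoff

namespace GoodPair

open ProbabilityTheory

variable {D : GoodPair Ω P E} {φ : Ω → ℝ} {μ ν : E}

theorem integrable_p (hμ : μ ∈ D.M) : Integrable (D.p μ) P := by
  simpa using D.F_finite _ (D.F_const 0) μ hμ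

theorem isProbabilityMeasure_obsMeasure (hμ : μ ∈ D.M) :
    IsProbabilityMeasure (obsMeasure D μ) := by
  constructor
  rw [obsMeasure, withDensity_apply _ .univ, Measure.restrict_univ,
    ← ofReal_integral_eq_lintegral_ofReal (integrable_p hμ)
      (.of_forall fun ω => (D.p_pos μ hμ ω).le), D.p_prob μ hμ, ENNReal.ofReal_one]

theorem obsMeasure_real (hμ : μ ∈ D.M) {B : Set Ω} (hB : MeasurableSet B) :
    (obsMeasure D μ).real B = ∫ ω in B, D.p μ ω ∂P := by
  rw [Measure.real, obsMeasure, withDensity_apply _ hB,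
    ← ofReal_integral_eq_lintegral_ofReal (integrable_p hμ).integrableOn
      (.of_forall fun ω => (D.p_pos μ hμ ω).le),
    ENNReal.toReal_ofReal (integral_nonneg fun ω => (D.p_pos μ hμ ω).le)]

theorem toReal_ofReal_p (hμ : μ ∈ D.M) (ω : Ω) : (ENNReal.ofReal (D.p μ ω)).toReal = D.p μ ω :=
  ENNReal.toReal_ofReal (D.p_pos μ hμ ω).le

theorem integrable_exp_mul (hφ : φ ∈ D.F) (hμ : μ ∈ D.M) (t : ℝ) :
    Integrable (fun ω => exp (t * φ ω)) (obsMeasure D μ) := by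
  refine (integrable_withDensity_iff (D.p_meas μ hμ).ennreal_ofReal
    (.of_forall fun _ => ENNReal.ofReal_lt_top)).2 ?_
  simpa only [toReal_ofReal_p hμ, Pi.smul_apply, smul_eq_mul] using
    D.F_finite (t • φ) (D.F.smul_mem t hφ) μ hμ

theorem mgf_obsMeasure (hμ : μ ∈ D.M) (φ : Ω → ℝ) (t : ℝ) :
    mgf φ (obsMeasure D μ) t = ∫ ω, exp (t * φ ω) * D.p μ ω ∂P := by
  rw [mgf, obsMeasure, integral_withDensity_eq_integral_toReal_smul
    (D.p_meas μ hμ).ennreal_ofReal (.of_forall fun _ => ENNReal.ofReal_lt_top)]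
  simp only [toReal_ofReal_p hμ, smul_eq_mul, mul_comm]

theorem concaveOn_cgf (hφ : φ ∈ D.F) (t : ℝ) :
    ConcaveOn ℝ D.M fun μ => cgf φ (obsMeasure D μ) t :=
  (D.F_concave (t • φ) (D.F.smul_mem t hφ)).congr fun μ hμ => by
    simp only [cgf, mgf_obsMeasure hμ, Pi.smul_apply, smul_eq_mul]

/-- The Hellinger affinity `∫ √(p_μ p_ν) dP` of two members of the family: `1` for identical
distributions, close to `0` for distributions that are easy to tell apart. -/
noncomputable def affinity (D : GoodPair Ω P E) (μ ν : E) : ℝ :=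
  ∫ ω, √(D.p μ ω * D.p ν ω) ∂P

theorem integrable_sqrt_p_mul_p (hμ : μ ∈ D.M) (hν : ν ∈ D.M) :
    Integrable (fun ω => √(D.p μ ω * D.p ν ω)) P :=
  integrable_sqrt_mul (integrable_p hμ) (integrable_p hν) (.of_forall fun ω => (D.p_pos μ hμ ω).le)

theorem affinity_self (hμ : μ ∈ D.M) : D.affinity μ μ = 1 := by
  simp only [affinity, sqrt_mul_self (D.p_pos μ hμ _).le, D.p_prob μ hμ]

theorem affinity_comm (μ ν : E) : D.affinity μ ν = D.affinity ν μ := by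
  simp only [affinity, mul_comm]

theorem affinity_pos (hμ : μ ∈ D.M) (hν : ν ∈ D.M) : 0 < D.affinity μ ν := by
  have hP : P ≠ 0 := by
    rintro rfl
    simpa using D.p_prob μ hμ
  have hpos : ∀ ω, 0 < √(D.p μ ω * D.p ν ω) := fun ω =>
    sqrt_pos.2 (mul_pos (D.p_pos μ hμ ω) (D.p_pos ν hν ω))
  rw [affinity, integral_pos_iff_support_of_nonneg (fun ω => (hpos ω).le)
    (integrable_sqrt_p_mul_p hμ hν), Function.support_eq_univ fun ω => (hpos ω).ne']
  exact Measure.measure_univ_pos.2 hP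

theorem setIntegral_sqrt_p_mul_p_le (hμ : μ ∈ D.M) (hν : ν ∈ D.M) {B : Set Ω}
    (hB : MeasurableSet B) :
    ∫ ω in B, √(D.p μ ω * D.p ν ω) ∂P
      ≤ √((obsMeasure D μ).real B) * √((obsMeasure D ν).real B) := by
  rw [obsMeasure_real hμ hB, obsMeasure_real hν hB]
  exact integral_sqrt_mul_le (integrable_p hμ).integrableOn (integrable_p hν).integrableOn
    (.of_forall fun ω => (D.p_pos μ hμ ω).le) (.of_forall fun ω => (D.p_pos ν hν ω).le)

theorem affinity_le_sqrt_mul_add (hμ : μ ∈ D.M) (hν : ν ∈ D.M) {B : Set Ω}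
    (hB : MeasurableSet B) :
    D.affinity μ ν ≤ √((obsMeasure D μ).real B) * √((obsMeasure D ν).real B)
      + √((obsMeasure D μ).real Bᶜ) * √((obsMeasure D ν).real Bᶜ) := by
  rw [affinity, ← integral_add_compl hB (integrable_sqrt_p_mul_p hμ hν)]
  exact add_le_add (setIntegral_sqrt_p_mul_p_le hμ hν hB)
    (setIntegral_sqrt_p_mul_p_le hμ hν hB.compl)

theorem affinity_le_sqrt_add_sqrt (hμ : μ ∈ D.M) (hν : ν ∈ D.M) {B : Set Ω}
    (hB : MeasurableSet B) :
    D.affinity μ ν ≤ √((obsMeasure D μ).real B) + √((obsMeasure D ν).real Bᶜ) := by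
  have := isProbabilityMeasure_obsMeasure hμ
  have := isProbabilityMeasure_obsMeasure hν
  refine (affinity_le_sqrt_mul_add hμ hν hB).trans (add_le_add ?_ ?_)
  · exact mul_le_of_le_one_right (sqrt_nonneg _) (sqrt_le_one.2 measureReal_le_one)
  · exact mul_le_of_le_one_left (sqrt_nonneg _) (sqrt_le_one.2 measureReal_le_one)

theorem sq_sqrt_sub_sqrt_le (hμ : μ ∈ D.M) (hν : ν ∈ D.M) {B : Set Ω} (hB : MeasurableSet B) :
    (√((obsMeasure D μ).real B) - √((obsMeasure D ν).real B)) ^ 2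
      ≤ 2 * (1 - D.affinity μ ν) := by
  have := isProbabilityMeasure_obsMeasure hμ
  have := isProbabilityMeasure_obsMeasure hν
  have hle := affinity_le_sqrt_mul_add hμ hν hB
  have hcompl := two_mul_le_add_sq √((obsMeasure D μ).real Bᶜ) √((obsMeasure D ν).real Bᶜ)
  rw [sq_sqrt measureReal_nonneg, sq_sqrt measureReal_nonneg, probReal_compl_eq_one_sub hB,
    probReal_compl_eq_one_sub hB] at hcompl
  rw [probReal_compl_eq_one_sub hB, probReal_compl_eq_one_sub hB] at hle
  rw [sub_sq, sq_sqrt measureReal_nonneg, sq_sqrt measureReal_nonneg]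
  linarith

theorem two_mul_log_affinity_le (hφ : φ ∈ D.F) (hμ : μ ∈ D.M) (hν : ν ∈ D.M) :
    2 * log (D.affinity μ ν) ≤ cgf φ (obsMeasure D μ) 1 + cgf φ (obsMeasure D ν) (-1) := by
  have := isProbabilityMeasure_obsMeasure hμ
  have := isProbabilityMeasure_obsMeasure hν
  have hμ0 := mgf_pos (integrable_exp_mul hφ hμ 1)
  have hν0 := mgf_pos (integrable_exp_mul hφ hν (-1))
  have hprod : ∀ ω, exp (1 * φ ω) * D.p μ ω * (exp (-1 * φ ω) * D.p ν ω)
      = D.p μ ω * D.p ν ω := fun ω => by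
    rw [mul_mul_mul_comm, ← exp_add, ← add_mul, add_neg_cancel, zero_mul, exp_zero, one_mul]
  have hint : ∀ {ν}, ν ∈ D.M → ∀ t, Integrable (fun ω => exp (t * φ ω) * D.p ν ω) P :=
    fun hν t => D.F_finite (t • φ) (D.F.smul_mem t hφ) _ hν
  have hle := integral_sqrt_mul_le (hint hμ 1) (hint hν (-1))
    (.of_forall fun ω => mul_nonneg (exp_nonneg _) (D.p_pos μ hμ ω).le)
    (.of_forall fun ω => mul_nonneg (exp_nonneg _) (D.p_pos ν hν ω).le)
  simp_rw [hprod, ← mgf_obsMeasure hμ, ← mgf_obsMeasure hν] at hle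
  have hlog := log_le_log (affinity_pos hμ hν) hle
  rw [log_mul (sqrt_pos.2 hμ0).ne' (sqrt_pos.2 hν0).ne', log_sqrt hμ0.le, log_sqrt hν0.le] at hlog
  rw [cgf, cgf]
  linarith

-- Cauchy–Schwarz is an equality for half the log-likelihood ratio.
theorem exists_cgf_add_cgf_eq (hμ : μ ∈ D.M) (hν : ν ∈ D.M) :
    ∃ φ ∈ D.F, cgf φ (obsMeasure D μ) 1 + cgf φ (obsMeasure D ν) (-1)
      = 2 * log (D.affinity μ ν) := by
  refine ⟨(1 / 2 : ℝ) • fun ω => log (D.p ν ω / D.p μ ω),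
    D.F.smul_mem _ (D.logratio_mem ν hν μ hμ), ?_⟩
  have hexp_μ : ∀ ω, exp (1 * (1 / 2 * log (D.p ν ω / D.p μ ω))) * D.p μ ω
      = √(D.p μ ω * D.p ν ω) := fun ω => by
    rw [one_mul, one_div_mul_eq_div, exp_half_log_div_mul (D.p_pos μ hμ ω) (D.p_pos ν hν ω)]
  have hexp_ν : ∀ ω, exp (-1 * (1 / 2 * log (D.p ν ω / D.p μ ω))) * D.p ν ω
      = √(D.p μ ω * D.p ν ω) := fun ω => by
    rw [one_div_mul_eq_div, neg_one_mul, ← neg_div, ← log_inv, inv_div,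
      exp_half_log_div_mul (D.p_pos ν hν ω) (D.p_pos μ hμ ω), mul_comm]
  simp only [cgf, mgf_obsMeasure hμ, mgf_obsMeasure hν, Pi.smul_apply, smul_eq_mul, hexp_μ, hexp_ν,
    affinity]
  ring

theorem concaveOn_log_affinity :
    ConcaveOn ℝ (D.M ×ˢ D.M) fun z : E × E => log (D.affinity z.1 z.2) := by
  refine ⟨D.M_convex.prod D.M_convex, ?_⟩
  rintro ⟨μ, ν⟩ ⟨hμ, hν⟩ ⟨μ', ν'⟩ ⟨hμ', hν'⟩ a b ha hb hab
  obtain ⟨φ, hφ, heq⟩ := exists_cgf_add_cgf_eq (D.M_convex hμ hμ' ha hb hab)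
    (D.M_convex hν hν' ha hb hab)
  have h₁ := (concaveOn_cgf hφ 1).2 hμ hμ' ha hb hab
  have h₂ := (concaveOn_cgf hφ (-1)).2 hν hν' ha hb hab
  have h₃ := mul_le_mul_of_nonneg_left (two_mul_log_affinity_le hφ hμ hν) ha
  have h₄ := mul_le_mul_of_nonneg_left (two_mul_log_affinity_le hφ hμ' hν') hb
  simp only [smul_eq_mul, Prod.smul_mk, Prod.mk_add_mk] at h₁ h₂ ⊢
  linarith

end GoodPair

namespace GoodPair

open Filter Topology

variable {D : GoodPair Ω P E} {V : Type*} [NormedAddCommGroup V] [NormedSpace ℝ V]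
  [FiniteDimensional ℝ V] {A : V →ᵃ[ℝ] E}

theorem isOpen_preimage_M : IsOpen (A ⁻¹' D.M) :=
  D.M_open.preimage A.continuous_of_finiteDimensional

theorem continuousOn_affinity :
    ContinuousOn (fun z : V × V => D.affinity (A z.1) (A z.2)) ((A ⁻¹' D.M) ×ˢ (A ⁻¹' D.M)) :=
  ((concaveOn_log_affinity.comp_affineMap (A.prodMap A)).continuousOn
    (isOpen_preimage_M.prod isOpen_preimage_M)).rexp.congr fun _ hz =>
      (exp_log (affinity_pos hz.1 hz.2)).symm

theorem continuousOn_obsMeasure_real {B : Set Ω} (hB : MeasurableSet B) :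
    ContinuousOn (fun x => (obsMeasure D (A x)).real B) (A ⁻¹' D.M) := by
  suffices h : ContinuousOn (fun x => √((obsMeasure D (A x)).real B)) (A ⁻¹' D.M) from
    (h.pow 2).congr fun x _ => (sq_sqrt measureReal_nonneg).symm
  intro x₀ hx₀
  have haff : Tendsto (fun x => √(2 * (1 - D.affinity (A x) (A x₀)))) (𝓝[A ⁻¹' D.M] x₀) (𝓝 0) := by
    have h := (continuousOn_affinity (D := D) (A := A)).comp
      (continuousOn_id.prodMk continuousOn_const) (fun x hx => ⟨hx, hx₀⟩) x₀ hx₀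
    simpa [ContinuousWithinAt, affinity_self hx₀] using ((h.const_sub 1).const_mul 2).sqrt
  refine tendsto_iff_dist_tendsto_zero.2 (squeeze_zero' (.of_forall fun _ => dist_nonneg) ?_ haff)
  filter_upwards [self_mem_nhdsWithin] with x hx
  exact abs_le_sqrt (sq_sqrt_sub_sqrt_le hx hx₀ hB)

theorem tendstoUniformlyOn_obsMeasure_real_tail {X : Set V} (hX : IsCompact X)
    (hA : ∀ x ∈ X, A x ∈ D.M) {f : Ω → ℝ} (hf : Measurable f) :
    TendstoUniformlyOn (fun (k : ℝ) x => (obsMeasure D (A x)).real {ω | k < |f ω|}) 0 atTop X := by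
  refine Antitone.tendstoUniformlyOn_of_forall_tendsto hX (fun k => ?_) (fun x hx k l hkl => ?_)
    continuousOn_const fun x hx => ?_
  · exact (continuousOn_obsMeasure_real (measurableSet_lt measurable_const hf.abs)).mono hA
  · have := isProbabilityMeasure_obsMeasure (hA x hx)
    exact measureReal_mono fun ω (hω : l < |f ω|) => hkl.trans_lt hω
  · have := isProbabilityMeasure_obsMeasure (hA x hx)
    have h := tendsto_measure_norm_gt_of_isTightMeasureSet
      (isTightMeasureSet_singleton (μ := (obsMeasure D (A x)).map f))
    have hmap : ∀ k : ℝ, (obsMeasure D (A x)).map f {r | k < ‖r‖}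
        = obsMeasure D (A x) {ω | k < |f ω|} := fun k =>
      Measure.map_apply hf (measurableSet_lt measurable_const measurable_norm)
    simp only [mem_singleton_iff, iSup_iSup_eq_left, hmap] at h
    exact (ENNReal.tendsto_toReal ENNReal.zero_ne_top).comp h

end GoodPair

section Risk

open ProbabilityTheory GoodPair

variable {D : GoodPair Ω P E} {A : (Fin n → ℝ) →ᵃ[ℝ] E} {g : Fin n → ℝ} {X : Set (Fin n → ℝ)}
  {ghat : Ω → ℝ} {ε δ c : ℝ}

theorem obsMeasure_real_lt_of_iSup_lt (hA : ∀ x ∈ X, A x ∈ D.M)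
    (hδ : (⨆ x ∈ X, obsMeasure D (A x) {ω | δ < |ghat ω - g ⬝ᵥ x|}) < ENNReal.ofReal ε) :
    ∀ x ∈ X, (obsMeasure D (A x)).real {ω | δ < |ghat ω - g ⬝ᵥ x|} < ε := fun x hx => by
  have := isProbabilityMeasure_obsMeasure (hA x hx)
  rw [← ENNReal.ofReal_lt_ofReal_iff_of_nonneg measureReal_nonneg, ofReal_measureReal]
  exact lt_of_le_of_lt
    (le_iSup₂ (f := fun x _ => obsMeasure D (A x) {ω | δ < |ghat ω - g ⬝ᵥ x|}) x hx) hδ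

theorem iSup_lt_of_obsMeasure_real_le (hA : ∀ x ∈ X, A x ∈ D.M) {η : ℝ} (hε : 0 < ε) (hη : η < ε)
    (hδ : ∀ x ∈ X, (obsMeasure D (A x)).real {ω | δ < |ghat ω - g ⬝ᵥ x|} ≤ η) :
    (⨆ x ∈ X, obsMeasure D (A x) {ω | δ < |ghat ω - g ⬝ᵥ x|}) < ENNReal.ofReal ε := by
  refine lt_of_le_of_lt (iSup₂_le fun x hx => ?_) ((ENNReal.ofReal_lt_ofReal_iff hε).2 hη)
  have := isProbabilityMeasure_obsMeasure (hA x hx)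
  rw [← ofReal_measureReal]
  exact ENNReal.ofReal_le_ofReal (hδ x hx)

theorem nonneg_of_iSup_lt (hXne : X.Nonempty) (hA : ∀ x ∈ X, A x ∈ D.M) (hε : ε ≤ 1)
    (hδ : (⨆ x ∈ X, obsMeasure D (A x) {ω | δ < |ghat ω - g ⬝ᵥ x|}) < ENNReal.ofReal ε) :
    0 ≤ δ := by
  obtain ⟨x, hx⟩ := hXne
  have := isProbabilityMeasure_obsMeasure (hA x hx)
  by_contra! hneg
  have huniv : {ω | δ < |ghat ω - g ⬝ᵥ x|} = univ :=
    eq_univ_of_forall fun ω => hneg.trans_le (abs_nonneg _)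
  have hlt := obsMeasure_real_lt_of_iSup_lt hA hδ x hx
  rw [huniv, probReal_univ] at hlt
  linarith

theorem risk_nonneg (hXne : X.Nonempty) (hA : ∀ x ∈ X, A x ∈ D.M) (hε : ε ≤ 1) :
    0 ≤ Risk D A g X ghat ε :=
  Real.sInf_nonneg fun _ hδ => nonneg_of_iSup_lt hXne hA hε hδ

theorem exists_iSup_lt (hX : IsCompact X) (hA : ∀ x ∈ X, A x ∈ D.M) (hghat : Measurable ghat)
    (hε : 0 < ε) :
    ∃ δ, (⨆ x ∈ X, obsMeasure D (A x) {ω | δ < |ghat ω - g ⬝ᵥ x|}) < ENNReal.ofReal ε := by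
  obtain ⟨C, hC⟩ := hX.exists_bound_of_continuousOn
    (continuous_const.dotProduct continuous_id : Continuous fun x => g ⬝ᵥ x).continuousOn
  obtain ⟨k, hk⟩ := (Metric.tendstoUniformlyOn_iff.1
    (tendstoUniformlyOn_obsMeasure_real_tail hX hA hghat) _ (half_pos hε)).exists
  refine ⟨k + C, iSup_lt_of_obsMeasure_real_le hA hε (half_lt_self hε) fun x hx => ?_⟩
  have := isProbabilityMeasure_obsMeasure (hA x hx)
  calc (obsMeasure D (A x)).real {ω | k + C < |ghat ω - g ⬝ᵥ x|}
      ≤ (obsMeasure D (A x)).real {ω | k < |ghat ω|} :=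
        measureReal_mono fun ω (hω : k + C < |ghat ω - g ⬝ᵥ x|) => show k < |ghat ω| by
          linarith [abs_sub (ghat ω) (g ⬝ᵥ x), hC x hx, norm_eq_abs (g ⬝ᵥ x)]
    _ ≤ ε / 2 := by
        simpa only [Pi.zero_apply, dist_zero_left, norm_of_nonneg measureReal_nonneg] using
          (hk x hx).le

theorem div_two_le_risk_of_le_affinity (hX : IsCompact X) (hA : ∀ x ∈ X, A x ∈ D.M)
    (hghat : Measurable ghat) (hε : 0 < ε) {x y : Fin n → ℝ} (hx : x ∈ X) (hy : y ∈ X)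
    (hxy : 2 * √ε ≤ D.affinity (A x) (A y)) :
    (g ⬝ᵥ x - g ⬝ᵥ y) / 2 ≤ Risk D A g X ghat ε := by
  refine le_csInf (exists_iSup_lt hX hA hghat hε) fun δ hδ => ?_
  by_contra! hlt
  have hmiss := obsMeasure_real_lt_of_iSup_lt hA hδ
  have hB : MeasurableSet {ω | δ < |ghat ω - g ⬝ᵥ x|} :=
    measurableSet_lt measurable_const (hghat.sub_const _).abs
  have := isProbabilityMeasure_obsMeasure (hA y hy)
  have hcompl : (obsMeasure D (A y)).real {ω | δ < |ghat ω - g ⬝ᵥ x|}ᶜ < ε := by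
    refine lt_of_le_of_lt (measureReal_mono fun ω hω => ?_) (hmiss y hy)
    have hclose := (abs_le.1 (not_lt.1 (show ¬δ < |ghat ω - g ⬝ᵥ x| from hω))).1
    exact lt_of_lt_of_le (by linarith) (le_abs_self (ghat ω - g ⬝ᵥ y))
  have haff := affinity_le_sqrt_add_sqrt (hA x hx) (hA y hy) hB
  have hsqrt_x := sqrt_lt_sqrt measureReal_nonneg (hmiss x hx)
  have hsqrt_y := sqrt_lt_sqrt measureReal_nonneg hcompl
  linarith

theorem phiFun_eq {x y : Fin n → ℝ} (hx : A x ∈ D.M) (hy : A y ∈ D.M) (r : ℝ) (φ : Ω → ℝ) (α : ℝ) :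
    PhiFun D A g r x y φ α = g ⬝ᵥ x - g ⬝ᵥ y + α * cgf φ (obsMeasure D (A y)) (1 / α)
      + α * cgf φ (obsMeasure D (A x)) (-1 / α) + 2 * α * r := by
  simp only [PhiFun, cgf, mgf_obsMeasure hx, mgf_obsMeasure hy, div_mul_eq_mul_div, one_mul,
    neg_one_mul]

theorem exists_add_const_forall_obsMeasure_real_le {φ : Ω → ℝ} {α : ℝ} (hXne : X.Nonempty)
    (hA : ∀ x ∈ X, A x ∈ D.M) (hε : 0 < ε) (hφ : φ ∈ D.F) (hα : 0 < α)
    (h : ∀ x ∈ X, ∀ y ∈ X, PhiFun D A g (log (2 / ε)) x y φ α ≤ 2 * c) :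
    ∃ k, ∀ x ∈ X, ∀ δ,
      (obsMeasure D (A x)).real {ω | δ < |φ ω + k - g ⬝ᵥ x|} ≤ ε * exp ((c - δ) / α) := by
  let u y := α * cgf φ (obsMeasure D (A y)) (1 / α) - g ⬝ᵥ y + α * log (2 / ε)
  let v x := α * cgf φ (obsMeasure D (A x)) (-1 / α) + g ⬝ᵥ x + α * log (2 / ε)
  obtain ⟨d, hud, hdv⟩ := exists_between_of_forall_le (hXne.image u)
    (hXne.image fun x => 2 * c - v x) <| by
      rintro _ ⟨y, hy, rfl⟩ _ ⟨x, hx, rfl⟩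
      have hxy := h x hx y hy
      rw [phiFun_eq (hA x hx) (hA y hy)] at hxy
      simp only [u, v]
      linarith
  refine ⟨c - d, fun x hx δ => ?_⟩
  have := isProbabilityMeasure_obsMeasure (hA x hx)
  have hu : u x ≤ d := hud (mem_image_of_mem u hx)
  have hv : d ≤ 2 * c - v x := hdv (mem_image_of_mem _ hx)
  simp only [u, v] at hu hv
  have htail := measureReal_lt_abs_add_le (b := c - α * log (2 / ε)) (k := c - d - g ⬝ᵥ x) hα
    (integrable_exp_mul hφ (hA x hx) _) (integrable_exp_mul hφ (hA x hx) _)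
    (by linarith) (by linarith) δ
  calc (obsMeasure D (A x)).real {ω | δ < |φ ω + (c - d) - g ⬝ᵥ x|}
      ≤ 2 * exp ((c - α * log (2 / ε) - δ) / α) := by simpa only [add_sub_assoc] using htail
    _ = 2 * exp ((c - δ) / α - log (2 / ε)) := by
        congr 2
        field_simp
        ring
    _ = ε * exp ((c - δ) / α) := by
        rw [exp_sub, exp_log (by positivity)]
        field_simp

theorem riskAff_le_of_forall_phiFun_le {φ : Ω → ℝ} {α : ℝ} (hXne : X.Nonempty)
    (hA : ∀ x ∈ X, A x ∈ D.M) (hε : 0 < ε) (hε1 : ε ≤ 1) (hφ : φ ∈ D.F) (hα : 0 < α)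
    (h : ∀ x ∈ X, ∀ y ∈ X, PhiFun D A g (log (2 / ε)) x y φ α ≤ 2 * c) :
    RiskAff D A g X ε ≤ c := by
  obtain ⟨k, hk⟩ := exists_add_const_forall_obsMeasure_real_le hXne hA hε hφ hα h
  have hbdd : BddBelow {ρ : ℝ | ∃ φ ∈ D.F, ρ = Risk D A g X φ ε} :=
    ⟨0, by rintro _ ⟨φ', -, rfl⟩; exact risk_nonneg hXne hA hε1⟩
  refine (csInf_le hbdd ⟨_, D.F.add_mem hφ (D.F_const k), rfl⟩).trans
    (le_of_forall_gt_imp_ge_of_dense fun δ hδ => ?_)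
  refine csInf_le ⟨0, fun _ hδ => nonneg_of_iSup_lt hXne hA hε1 hδ⟩
    (iSup_lt_of_obsMeasure_real_le hA hε ?_ fun x hx => hk x hx δ)
  exact mul_lt_of_lt_one_right hε (exp_lt_one_iff.2 (div_neg_of_neg_of_pos (sub_neg.2 hδ) hα))

theorem concaveOn_phiFun {φ : Ω → ℝ} {α : ℝ} (hφ : φ ∈ D.F) (hα : 0 ≤ α) (r : ℝ) :
    ConcaveOn ℝ ((A ⁻¹' D.M) ×ˢ (A ⁻¹' D.M)) fun z => PhiFun D A g r z.1 z.2 φ α := by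
  have hU : Convex ℝ (A ⁻¹' D.M) := D.M_convex.affine_preimage A
  have hcgf : ∀ t, ConcaveOn ℝ (A ⁻¹' D.M) fun x => α * cgf φ (obsMeasure D (A x)) t :=
    fun t => ((concaveOn_cgf hφ t).comp_affineMap A).smul hα
  have hdiff : ConcaveOn ℝ ((A ⁻¹' D.M) ×ˢ (A ⁻¹' D.M)) fun z => g ⬝ᵥ z.1 - g ⬝ᵥ z.2 :=
    (dotProductBilin ℝ ℝ g ∘ₗ (.fst ℝ _ _ - .snd ℝ _ _)).concaveOn (hU.prod hU) |>.congr
      fun z _ => dotProduct_sub g z.1 z.2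
  have hsnd := ((hcgf (1 / α)).comp_linearMap (.snd ℝ (Fin n → ℝ) (Fin n → ℝ))).subset
    (fun z hz => hz.2) (hU.prod hU)
  have hfst := ((hcgf (-1 / α)).comp_linearMap (.fst ℝ (Fin n → ℝ) (Fin n → ℝ))).subset
    (fun z hz => hz.1) (hU.prod hU)
  exact (((hdiff.add hsnd).add hfst).add_const (2 * α * r)).congr
    fun z hz => (phiFun_eq hz.1 hz.2 r φ α).symm

theorem continuousOn_phiFun {φ : Ω → ℝ} {α : ℝ} (hφ : φ ∈ D.F) (hα : 0 ≤ α) (r : ℝ) :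
    ContinuousOn (fun z => PhiFun D A g r z.1 z.2 φ α) ((A ⁻¹' D.M) ×ˢ (A ⁻¹' D.M)) :=
  (concaveOn_phiFun hφ hα r).continuousOn (isOpen_preimage_M.prod isOpen_preimage_M)

theorem convexOn_phiFun {x y : Fin n → ℝ} (hx : A x ∈ D.M) (hy : A y ∈ D.M) (r : ℝ) :
    ConvexOn ℝ ((D.F : Set (Ω → ℝ)) ×ˢ Ioi 0) fun w => PhiFun D A g r x y w.1 w.2 := by
  have hs : Convex ℝ ((D.F : Set (Ω → ℝ)) ×ˢ Ioi (0 : ℝ)) := D.F.convex.prod (convex_Ioi 0)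
  have hcgf_y := convexOn_mul_cgf_div fun φ hφ => integrable_exp_mul hφ hy 1
  have hcgf_x := convexOn_mul_cgf_div fun φ hφ => integrable_exp_mul hφ hx (-1)
  have hlin := ((2 * r) • LinearMap.snd ℝ (Ω → ℝ) ℝ).convexOn hs
  refine ((((convexOn_const (g ⬝ᵥ x - g ⬝ᵥ y) hs).add hcgf_y).add hcgf_x).add hlin).congr
    fun w _ => ?_
  simp only [phiFun_eq hx hy, Pi.add_apply, LinearMap.smul_apply, LinearMap.snd_apply, smul_eq_mul]
  ring

theorem exists_phiFun_lt {x y : Fin n → ℝ} {r : ℝ} (hx : A x ∈ D.M) (hy : A y ∈ D.M)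
    (h : exp (-r) ≤ D.affinity (A x) (A y) → g ⬝ᵥ x - g ⬝ᵥ y < c) :
    ∃ w ∈ (D.F : Set (Ω → ℝ)) ×ˢ Ioi (0 : ℝ), PhiFun D A g r x y w.1 w.2 < c := by
  obtain ⟨φ, hφ, hcgf⟩ := exists_cgf_add_cgf_eq hy hx
  obtain ⟨α, hα, hlt⟩ : ∃ α > 0,
      g ⬝ᵥ x - g ⬝ᵥ y + α * (2 * (log (D.affinity (A x) (A y)) + r)) < c :=
    exists_pos_add_mul_lt fun hr => h <| (le_log_iff_exp_le (affinity_pos hx hy)).1 (by linarith)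
  refine ⟨(α • φ, α), ⟨D.F.smul_mem α hφ, hα⟩, lt_of_eq_of_lt ?_ hlt⟩
  have hscale : ∀ (μ : Measure Ω) t, cgf (α • φ) μ (t / α) = cgf φ μ t := fun μ t => by
    rw [cgf, mgf_smul_left, mul_div_cancel₀ _ hα.ne', cgf]
  rw [phiFun_eq hx hy, hscale, hscale]
  rw [affinity_comm] at hcgf
  linear_combination α * hcgf

theorem exists_forall_phiFun_lt {r : ℝ} (hXne : X.Nonempty) (hX : IsCompact X)
    (hXcv : Convex ℝ X) (hA : ∀ x ∈ X, A x ∈ D.M)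
    (h : ∀ x ∈ X, ∀ y ∈ X, exp (-r) ≤ D.affinity (A x) (A y) → g ⬝ᵥ x - g ⬝ᵥ y < c) :
    ∃ φ ∈ D.F, ∃ α > 0, ∀ x ∈ X, ∀ y ∈ X, PhiFun D A g r x y φ α < c := by
  have hsub : X ×ˢ X ⊆ (A ⁻¹' D.M) ×ˢ (A ⁻¹' D.M) := prod_mono hA hA
  obtain ⟨w, ⟨hφ, hα⟩, hlt⟩ := exists_forall_lt_of_forall_exists_lt
    (f := fun (z : (Fin n → ℝ) × (Fin n → ℝ)) (w : (Ω → ℝ) × ℝ) => PhiFun D A g r z.1 z.2 w.1 w.2)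
    (hXne.prod hXne) (hX.prod hX)
    (fun w hw => (concaveOn_phiFun hw.1 (le_of_lt hw.2) r).subset hsub (hXcv.prod hXcv))
    (fun w hw => ((continuousOn_phiFun hw.1 (le_of_lt hw.2) r).mono hsub).upperSemicontinuousOn)
    (fun z hz => convexOn_phiFun (hA _ hz.1) (hA _ hz.2) r)
    fun z hz => exists_phiFun_lt (hA _ hz.1) (hA _ hz.2) (h _ hz.1 _ hz.2)
  exact ⟨w.1, hφ, w.2, hα, fun x hx y hy => hlt (x, y) ⟨hx, hy⟩⟩

/-- The modulus of continuity of the form `½ gᵀx` on `X` with respect to the affinity of the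
observations: the largest half-gap between two values of the form at signals whose observations
have affinity at least `e^{-r}`. -/
noncomputable def hellingerModulus (D : GoodPair Ω P E) (A : (Fin n → ℝ) →ᵃ[ℝ] E)
    (g : Fin n → ℝ) (X : Set (Fin n → ℝ)) (r : ℝ) : ℝ :=
  sSup {v : ℝ | ∃ x ∈ X, ∃ y ∈ X,
    exp (-r) ≤ D.affinity (A x) (A y) ∧ v = (g ⬝ᵥ x - g ⬝ᵥ y) / 2}

theorem le_hellingerModulus {x y : Fin n → ℝ} {r : ℝ} (hX : IsCompact X) (hx : x ∈ X) (hy : y ∈ X)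
    (hxy : exp (-r) ≤ D.affinity (A x) (A y)) :
    (g ⬝ᵥ x - g ⬝ᵥ y) / 2 ≤ hellingerModulus D A g X r := by
  refine le_csSup ?_ ⟨x, hx, y, hy, hxy, rfl⟩
  have hcont : Continuous fun z : (Fin n → ℝ) × (Fin n → ℝ) => (g ⬝ᵥ z.1 - g ⬝ᵥ z.2) / 2 :=
    ((continuous_const.dotProduct continuous_fst).sub
      (continuous_const.dotProduct continuous_snd)).div_const 2
  refine ((hX.prod hX).bddAbove_image hcont.continuousOn).mono ?_
  rintro _ ⟨x, hx, y, hy, -, rfl⟩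
  exact mem_image_of_mem _ (mk_mem_prod hx hy)

theorem hellingerModulus_le {r : ℝ} (hXne : X.Nonempty) (hA : ∀ x ∈ X, A x ∈ D.M) (hr : 0 ≤ r)
    (h : ∀ x ∈ X, ∀ y ∈ X, exp (-r) ≤ D.affinity (A x) (A y) → (g ⬝ᵥ x - g ⬝ᵥ y) / 2 ≤ c) :
    hellingerModulus D A g X r ≤ c := by
  obtain ⟨x, hx⟩ := hXne
  refine csSup_le ⟨_, x, hx, x, hx, ?_, rfl⟩ ?_
  · rw [affinity_self (hA x hx)]
    exact exp_le_one_iff.2 (neg_nonpos.2 hr)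
  · rintro _ ⟨x, hx, y, hy, hxy, rfl⟩
    exact h x hx y hy hxy

theorem riskAff_le_hellingerModulus (hXne : X.Nonempty) (hX : IsCompact X) (hXcv : Convex ℝ X)
    (hA : ∀ x ∈ X, A x ∈ D.M) (hε : 0 < ε) (hε1 : ε ≤ 1) :
    RiskAff D A g X ε ≤ hellingerModulus D A g X (log (2 / ε)) := by
  refine le_of_forall_gt_imp_ge_of_dense fun c hc => ?_
  obtain ⟨φ, hφ, α, hα, hlt⟩ := exists_forall_phiFun_lt (g := g) (c := 2 * c) (r := log (2 / ε))
    hXne hX hXcv hA fun x hx y hy hxy => by linarith [le_hellingerModulus (g := g) hX hx hy hxy]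
  exact riskAff_le_of_forall_phiFun_le hXne hA hε hε1 hφ hα fun x hx y hy => (hlt x hx y hy).le

theorem hellingerModulus_le_riskStar (hXne : X.Nonempty) (hX : IsCompact X)
    (hA : ∀ x ∈ X, A x ∈ D.M) (hε : 0 < ε) (hε1 : ε ≤ 1 / 4) :
    hellingerModulus D A g X (log (1 / (4 * ε)) / 2) ≤ RiskStar D A g X ε := by
  have hexp : exp (-(log (1 / (4 * ε)) / 2)) = 2 * √ε := by
    rw [← neg_div, ← log_inv, exp_half, one_div, inv_inv, exp_log (by positivity),
      sqrt_mul (by norm_num), show (4 : ℝ) = 2 ^ 2 by norm_num, sqrt_sq (by norm_num)]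
  have hr : 0 ≤ log (1 / (4 * ε)) / 2 :=
    div_nonneg (log_nonneg ((one_le_div (by positivity)).2 (by linarith))) zero_le_two
  refine hellingerModulus_le hXne hA hr fun x hx y hy hxy => ?_
  refine le_csInf ⟨_, 0, measurable_const, rfl⟩ ?_
  rintro _ ⟨ghat, hghat, rfl⟩
  exact div_two_le_risk_of_le_affinity hX hA hghat hε hx hy (hexp ▸ hxy)

theorem mul_hellingerModulus_le {t r : ℝ} (hXne : X.Nonempty) (hX : IsCompact X)
    (hXcv : Convex ℝ X) (hA : ∀ x ∈ X, A x ∈ D.M) (hr : 0 ≤ r) (ht0 : 0 < t) (ht1 : t ≤ 1) :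
    t * hellingerModulus D A g X r ≤ hellingerModulus D A g X (t * r) := by
  rw [← le_div_iff₀' ht0]
  refine hellingerModulus_le hXne hA hr fun x hx y hy hxy => (le_div_iff₀' ht0).2 ?_
  have hsum : 1 - t + t = 1 := sub_add_cancel 1 t
  have hz : (1 - t) • x + t • y ∈ X := hXcv hx hy (sub_nonneg.2 ht1) ht0.le hsum
  have haff : exp (-(t * r)) ≤ D.affinity (A x) (A ((1 - t) • x + t • y)) := by
    rw [← le_log_iff_exp_le (affinity_pos (hA x hx) (hA y hy))] at hxy
    rw [← le_log_iff_exp_le (affinity_pos (hA x hx) (hA _ hz)),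
      Convex.combo_affine_apply hsum]
    have hconc := concaveOn_log_affinity.2 (mk_mem_prod (hA x hx) (hA x hx))
      (mk_mem_prod (hA x hx) (hA y hy)) (sub_nonneg.2 ht1) ht0.le hsum
    simp only [Prod.smul_mk, Prod.mk_add_mk, Convex.combo_self hsum, affinity_self (hA x hx),
      log_one, smul_eq_mul, mul_zero, zero_add] at hconc
    linarith [mul_le_mul_of_nonneg_left hxy ht0.le]
  calc t * ((g ⬝ᵥ x - g ⬝ᵥ y) / 2) = (g ⬝ᵥ x - g ⬝ᵥ ((1 - t) • x + t • y)) / 2 := by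
        simp only [dotProduct_add, dotProduct_smul, smul_eq_mul]
        ring
    _ ≤ hellingerModulus D A g X (t * r) := le_hellingerModulus hX hx hz haff

theorem riskAff_zero_nonpos : RiskAff D A g X 0 ≤ 0 :=
  Real.sInf_nonpos <| by
    rintro _ ⟨φ, -, rfl⟩
    simp [Risk]

theorem affine_estimates_near_optimal_general (hXne : X.Nonempty) (hX : IsCompact X)
    (hXcv : Convex ℝ X) (hA : ∀ x ∈ X, A x ∈ D.M) (hε0 : 0 ≤ ε) (hε1 : ε < 1 / 4) :
    RiskAff D A g X ε ≤ (2 * log (2 / ε) / log (1 / (4 * ε))) * RiskStar D A g X ε := by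
  rcases hε0.eq_or_lt with rfl | hε
  · simpa using riskAff_zero_nonpos
  have hs : 0 < log (1 / (4 * ε)) := log_pos ((one_lt_div (by positivity)).2 (by linarith))
  have hsr : log (1 / (4 * ε)) ≤ log (2 / ε) :=
    log_le_log (by positivity) ((div_le_div_iff₀ (by positivity) hε).2 (by linarith))
  have hr : 0 < log (2 / ε) := hs.trans_le hsr
  set t := log (1 / (4 * ε)) / (2 * log (2 / ε))
  have ht0 : 0 < t := by positivity
  have ht1 : t ≤ 1 := (div_le_one (by positivity)).2 (by linarith)
  have ht : t * log (2 / ε) = log (1 / (4 * ε)) / 2 := by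
    simp only [t]
    field_simp
  calc RiskAff D A g X ε ≤ hellingerModulus D A g X (log (2 / ε)) :=
        riskAff_le_hellingerModulus hXne hX hXcv hA hε (by linarith)
    _ ≤ hellingerModulus D A g X (log (1 / (4 * ε)) / 2) / t :=
        (le_div_iff₀' ht0).2 <| ht ▸ mul_hellingerModulus_le hXne hX hXcv hA hr.le ht0 ht1
    _ ≤ RiskStar D A g X ε / t := div_le_div_of_nonneg_right
        (hellingerModulus_le_riskStar hXne hX hA hε hε1.le) ht0.le
    _ = 2 * log (2 / ε) / log (1 / (4 * ε)) * RiskStar D A g X ε := by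
        rw [div_eq_inv_mul, inv_div]

end Risk

/-- **Theorem 3.1.** For a good pair `(𝒟, ℱ)`, a convex compact `X ⊆ ℝⁿ`, an affine
map `A` with `A(X) ⊆ M` and a linear form `g`, for every `0 ≤ ε < 1/4` the minimax
optimal `ε`-risk of affine estimates is within the factor
`θ(ε) = 2 ln(2/ε)/ln(1/(4ε))` of the minimax optimal `ε`-risk over all estimates. -/
theorem affine_estimates_near_optimal
    {Ω : Type*} [MeasurableSpace Ω] [TopologicalSpace Ω] [PolishSpace Ω] [BorelSpace Ω]
    {P : Measure Ω} [SigmaFinite P] {m n : ℕ}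
    (D : GoodPair Ω P (Fin m → ℝ))
    (X : Set (Fin n → ℝ)) (hXne : X.Nonempty) (hXcp : IsCompact X) (hXcv : Convex ℝ X)
    (A : (Fin n → ℝ) →ᵃ[ℝ] (Fin m → ℝ)) (hA : ∀ x ∈ X, A x ∈ D.M)
    (g : Fin n → ℝ) (ε : ℝ) (hε0 : 0 ≤ ε) (hε1 : ε < 1/4) :
    RiskAff D A g X ε ≤
      (2 * Real.log (2 / ε) / Real.log (1 / (4 * ε))) * RiskStar D A g X ε :=
  affine_estimates_near_optimal_general hXne hXcp hXcv hA hε0 hε1
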